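/- Let α ∈ ℂ with α ≠ 0, let R ∈ ℂ(z)^{m×m}, and define G ∈ ℂ(z)^{m×m} entrywise by G_{ij} := the substitution of (α + α·z)/(conj(α) − conj(α)·z) into R_{ij}. Then R is para-Hermitian if and only if G is *-even, i.e. G^* = G(−z), where G(−z) is the matrix obtained from G by entrywise substitution of −z for z. -/

import Mathlib

/-!
Substitution of a nonconstant `g` is an injective endomorphism of `ℂ(z)` over `ℂ`, and conjugation
turns it into substitution of `conj g`. If `h := g(-z)` equals `(conj g)⁻¹`, that is, if `g` maps
the imaginary axis into the unit circle, then for `G := R(g)` we get `G(-z) = R(h)` and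
`G^* = R^*(conj g) = R^*(h⁻¹)`. The latter is the para-conjugate of `R` evaluated at `h`, so
injectivity of `f ↦ f(h)` identifies `G^* = G(-z)` with the para-Hermitian condition.
-/

open Polynomial Matrix

set_option synthInstance.maxHeartbeats 1000000
set_option maxHeartbeats 1000000

noncomputable section

/-- Coefficientwise complex conjugation on rational functions. -/
def conjRF : RatFunc ℂ →+* RatFunc ℂ :=
  RatFunc.mapRingHom (Polynomial.mapRingHom (starRingEnd ℂ))
    (by
      intro x hx
      simp only [Submonoid.mem_comap, mem_nonZeroDivisors_iff_ne_zero] at *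
      intro h
      exact hx (Polynomial.map_injective _ (starRingEnd ℂ).injective (by simpa using h)))

/-- Substitution of `g` for the variable in `f`. -/
def subst (g f : RatFunc ℂ) : RatFunc ℂ := RatFunc.eval (algebraMap ℂ (RatFunc ℂ)) g f

/-- Constant complex matrices regarded as matrices over `ℂ(z)`. -/
def toRF {n o : Type*} (A : Matrix n o ℂ) : Matrix n o (RatFunc ℂ) :=
  A.map (algebraMap ℂ (RatFunc ℂ))

/-- The para-conjugate `R^*(1/z)`. -/
def paraConj {n : Type*} (R : Matrix n n (RatFunc ℂ)) : Matrix n n (RatFunc ℂ) :=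
  fun i j => subst (RatFunc.X)⁻¹ (conjRF (R j i))

def IsParaHermitian {n : Type*} (R : Matrix n n (RatFunc ℂ)) : Prop := paraConj R = R

def IsParaSkewHermitian {n : Type*} (R : Matrix n n (RatFunc ℂ)) : Prop := paraConj R = -R

/-- The variable `z` of `ℂ(z)`. -/
def zz : RatFunc ℂ := RatFunc.X

/-- Coefficientwise-conjugate transpose of a matrix over `ℂ(z)`. -/
def conjT {a b : Type*} (R : Matrix a b (RatFunc ℂ)) : Matrix b a (RatFunc ℂ) :=
  fun i j => conjRF (R j i)

/-- Entrywise substitution of `g` into a matrix over `ℂ(z)`. -/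
def substMat {a b : Type*} (g : RatFunc ℂ) (R : Matrix a b (RatFunc ℂ)) :
    Matrix a b (RatFunc ℂ) :=
  fun i j => subst g (R i j)

section RatFunc

universe u

variable {K L M : Type u} [Field K] [Field L] [Field M]

theorem map_ratFunc_eval (φ : L →+* M) (σ : K →+* L) (x : L) (f : RatFunc K) :
    φ (RatFunc.eval σ x f) = RatFunc.eval (φ.comp σ) (φ x) f := by
  simp only [RatFunc.eval, map_div₀, Polynomial.hom_eval₂]

theorem ratFunc_eval_C_X (f : RatFunc K) : RatFunc.eval RatFunc.C RatFunc.X f = f := by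
  simp only [RatFunc.eval, ← RatFunc.algebraMap_eq_C, ← Polynomial.aeval_def,
    RatFunc.aeval_X_left_eq_algebraMap, RatFunc.num_div_denom]

theorem ratFunc_ringHom_ext {φ ψ : RatFunc K →+* L}
    (hC : ∀ a, φ (RatFunc.C a) = ψ (RatFunc.C a)) (hX : φ RatFunc.X = ψ RatFunc.X) : φ = ψ := by
  ext f
  rw [← ratFunc_eval_C_X f, map_ratFunc_eval, map_ratFunc_eval, hX,
    show φ.comp RatFunc.C = ψ.comp RatFunc.C from RingHom.ext hC]

variable [Algebra K L]

/-- Evaluation at a transcendental element `x`, as a homomorphism of algebras. For general `x`,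
`RatFunc.eval` is not even additive, because a denominator may vanish at `x`. -/
def ratFuncEvalAlgHom (x : L) (hx : Transcendental K x) : RatFunc K →ₐ[K] L :=
  RatFunc.liftAlgHom (aeval x)
    (nonZeroDivisors_le_comap_nonZeroDivisors_of_injective _ (transcendental_iff_injective.mp hx))

variable {x : L} (hx : Transcendental K x)

theorem ratFuncEvalAlgHom_apply (f : RatFunc K) :
    ratFuncEvalAlgHom x hx f = RatFunc.eval (algebraMap K L) x f :=
  RatFunc.liftAlgHom_apply _ _ f

@[simp]
theorem ratFuncEvalAlgHom_C (a : K) : ratFuncEvalAlgHom x hx (RatFunc.C a) = algebraMap K L a :=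
  (ratFuncEvalAlgHom x hx).commutes a

@[simp]
theorem ratFuncEvalAlgHom_X : ratFuncEvalAlgHom x hx RatFunc.X = x := by
  rw [ratFuncEvalAlgHom_apply, RatFunc.eval_X]

theorem ratFunc_C_add_C_mul_X_eq_zero_iff {a b : K} :
    RatFunc.C a + RatFunc.C b * RatFunc.X = 0 ↔ a = 0 ∧ b = 0 := by
  refine ⟨fun h => ?_, fun ⟨ha, hb⟩ => by simp [ha, hb]⟩
  have hpoly : (Polynomial.C a + Polynomial.C b * Polynomial.X : K[X]) = 0 :=
    RatFunc.algebraMap_injective K (by simpa using h)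
  exact ⟨by simpa using congrArg (coeff · 0) hpoly, by simpa using congrArg (coeff · 1) hpoly⟩

theorem transcendental_mobius {a b c d : K} (h : a * d - b * c ≠ 0) :
    Transcendental K ((RatFunc.C a + RatFunc.C b * RatFunc.X) /
      (RatFunc.C c + RatFunc.C d * RatFunc.X)) := by
  refine RatFunc.transcendental_of_ne_C _ fun ⟨e, he⟩ => h ?_
  have hden : RatFunc.C c + RatFunc.C d * RatFunc.X ≠ 0 := fun h0 => by
    obtain ⟨rfl, rfl⟩ := ratFunc_C_add_C_mul_X_eq_zero_iff.mp h0
    simp at h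
  rw [div_eq_iff hden] at he
  have hlin : RatFunc.C (a - e * c) + RatFunc.C (b - e * d) * RatFunc.X = 0 := by
    simp only [map_sub, map_mul]
    linear_combination he
  obtain ⟨ha, hb⟩ := ratFunc_C_add_C_mul_X_eq_zero_iff.mp hlin
  linear_combination d * ha - c * hb

end RatFunc

section Conjugation

theorem conjRF_algebraMap (p : ℂ[X]) :
    conjRF (algebraMap ℂ[X] (RatFunc ℂ) p) =
      algebraMap ℂ[X] (RatFunc ℂ) (p.map (starRingEnd ℂ)) := by
  simp [conjRF, RatFunc.coe_mapRingHom_eq_coe_map, RatFunc.map_apply]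

@[simp]
theorem conjRF_C (a : ℂ) : conjRF (RatFunc.C a) = RatFunc.C (starRingEnd ℂ a) := by
  rw [← RatFunc.algebraMap_C, conjRF_algebraMap, Polynomial.map_C, RatFunc.algebraMap_C]

@[simp]
theorem conjRF_X : conjRF RatFunc.X = RatFunc.X := by
  rw [← RatFunc.algebraMap_X, conjRF_algebraMap, Polynomial.map_X]

theorem transcendental_conjRF {g : RatFunc ℂ} (hg : Transcendental ℂ g) :
    Transcendental ℂ (conjRF g) :=
  hg.ringHom_of_comp_eq (starRingEnd ℂ) conjRF star_involutive.surjective conjRF.injective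
    (RingHom.ext fun a => (conjRF_C a).symm)

end Conjugation

section Substitution

variable {g : RatFunc ℂ} {m n : Type*}

theorem subst_eq_ratFuncEvalAlgHom (hg : Transcendental ℂ g) :
    subst g = ratFuncEvalAlgHom g hg :=
  funext fun f => (ratFuncEvalAlgHom_apply hg f).symm

theorem subst_subst (hg : Transcendental ℂ g) (h f : RatFunc ℂ) :
    subst g (subst h f) = subst (subst g h) f := by
  rw [subst_eq_ratFuncEvalAlgHom hg, subst, subst, ← AlgHom.coe_toRingHom, map_ratFunc_eval]
  exact congrArg (RatFunc.eval · _ f) (AlgHom.comp_algebraMap _)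

theorem conjRF_subst (hg : Transcendental ℂ g) (f : RatFunc ℂ) :
    conjRF (subst g f) = subst (conjRF g) (conjRF f) := by
  have hcomp : conjRF.comp (ratFuncEvalAlgHom g hg).toRingHom =
      (ratFuncEvalAlgHom (conjRF g) (transcendental_conjRF hg)).toRingHom.comp conjRF := by
    apply ratFunc_ringHom_ext <;> simp
  rw [subst_eq_ratFuncEvalAlgHom hg, subst_eq_ratFuncEvalAlgHom (transcendental_conjRF hg)]
  exact RingHom.congr_fun hcomp f

theorem subst_injective (hg : Transcendental ℂ g) : Function.Injective (subst g) :=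
  subst_eq_ratFuncEvalAlgHom hg ▸ (ratFuncEvalAlgHom g hg).injective

theorem subst_X_inv (hg : Transcendental ℂ g) : subst g RatFunc.X⁻¹ = g⁻¹ := by
  rw [subst_eq_ratFuncEvalAlgHom hg, map_inv₀, ratFuncEvalAlgHom_X]

theorem substMat_substMat (hg : Transcendental ℂ g) (h : RatFunc ℂ)
    (R : Matrix m n (RatFunc ℂ)) : substMat g (substMat h R) = substMat (subst g h) R :=
  Matrix.ext fun _ _ => subst_subst hg h _

theorem conjT_substMat (hg : Transcendental ℂ g) (R : Matrix m n (RatFunc ℂ)) :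
    conjT (substMat g R) = substMat (conjRF g) (conjT R) :=
  Matrix.ext fun _ _ => conjRF_subst hg _

theorem substMat_injective (hg : Transcendental ℂ g) :
    Function.Injective (substMat g : Matrix m n (RatFunc ℂ) → Matrix m n (RatFunc ℂ)) :=
  fun _ _ h => Matrix.ext fun i j => subst_injective hg (congrFun₂ h i j)

theorem paraConj_eq_substMat_conjT (R : Matrix n n (RatFunc ℂ)) :
    paraConj R = substMat RatFunc.X⁻¹ (conjT R) :=
  rfl

theorem substMat_paraConj (hg : Transcendental ℂ g) (R : Matrix n n (RatFunc ℂ)) :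
    substMat g (paraConj R) = substMat g⁻¹ (conjT R) := by
  rw [paraConj_eq_substMat_conjT, substMat_substMat hg, subst_X_inv hg]

end Substitution

section Cayley

theorem transcendental_neg_zz : Transcendental ℂ (-zz) :=
  fun h => RatFunc.transcendental_X (neg_neg zz ▸ h.neg)

/-- The Möbius transformation `z ↦ (α + α z) / (conj α - conj α z)`, a rotated Cayley transform: for
`α ≠ 0` it takes the imaginary axis into the unit circle. -/
def cayley (α : ℂ) : RatFunc ℂ :=
  (RatFunc.C α + RatFunc.C α * zz) /
    (RatFunc.C (starRingEnd ℂ α) - RatFunc.C (starRingEnd ℂ α) * zz)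

theorem transcendental_cayley {α : ℂ} (hα : α ≠ 0) : Transcendental ℂ (cayley α) := by
  have hdet : α * -starRingEnd ℂ α - α * starRingEnd ℂ α ≠ 0 := by
    simp [← neg_add', ← two_mul, hα]
  simpa [cayley, zz, sub_eq_add_neg] using transcendental_mobius hdet

theorem conjRF_cayley (α : ℂ) :
    conjRF (cayley α) =
      (RatFunc.C (starRingEnd ℂ α) + RatFunc.C (starRingEnd ℂ α) * zz) /
        (RatFunc.C α - RatFunc.C α * zz) := by
  simp [cayley, zz]

theorem subst_neg_zz_cayley (α : ℂ) : subst (-zz) (cayley α) = (conjRF (cayley α))⁻¹ := by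
  rw [subst_eq_ratFuncEvalAlgHom transcendental_neg_zz, conjRF_cayley]
  simp [cayley, zz, sub_eq_add_neg]

end Cayley

theorem paraHermitian_iff_mobius_alpha_even_general {n : Type*} {g : RatFunc ℂ}
    (hg : Transcendental ℂ g) (hconj : subst (-zz) g = (conjRF g)⁻¹)
    (R : Matrix n n (RatFunc ℂ)) :
    IsParaHermitian R ↔ conjT (substMat g R) = substMat (-zz) (substMat g R) := by
  have hinv : Transcendental ℂ (conjRF g)⁻¹ :=
    fun h => transcendental_conjRF hg (IsAlgebraic.inv_iff.mp h)
  rw [conjT_substMat hg, substMat_substMat transcendental_neg_zz, hconj, IsParaHermitian,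
    ← (substMat_injective hinv).eq_iff, substMat_paraConj hinv, inv_inv]

/-- `R` is para-Hermitian iff `G(s) := R((α+αs)/(conj α − conj α s))` is `*`-even. -/
theorem paraHermitian_iff_mobius_alpha_even (m : ℕ) (α : ℂ) (hα : α ≠ 0)
    (R G : Matrix (Fin m) (Fin m) (RatFunc ℂ))
    (hG : G = substMat ((RatFunc.C α + RatFunc.C α * zz) /
        (RatFunc.C (starRingEnd ℂ α) - RatFunc.C (starRingEnd ℂ α) * zz)) R) :
    IsParaHermitian R ↔ conjT G = substMat (-zz) G := by
  subst hG
  exact paraHermitian_iff_mobius_alpha_even_general (transcendental_cayley hα)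
    (subst_neg_zz_cayley α) R
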